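/- Let χ : K^× → ℤ/2ℤ be a group homomorphism whose kernel equals the norm group N_{L|K}(L^×), and let n ≥ 1 be such that χ vanishes on U_{n+1} but does not vanish identically on U_n. If e₁/e₂ ∉ U_{2n+1} (i.e. e₁ ≢ e₂ mod 𝔭^{2n+1}), then the subgroup of (ℤ/2ℤ)² generated by the set Im equals all of (ℤ/2ℤ)². -/

import Mathlib

/-- An additively written, normalized (i.e. surjective onto `ℤ`) discrete
valuation on a field `K`.  All axioms are imposed at nonzero arguments only,
so the value of `v` at `0` is irrelevant.  For a finite extension `K` of
`ℚ_[p]`, the normalized valuation `v : K^× → ℤ` of the paper is such a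
structure. -/
structure DValuation (K : Type*) [Field K] where
  /-- the valuation map -/
  v : K → ℤ
  v_mul : ∀ ⦃x y : K⦄, x ≠ 0 → y ≠ 0 → v (x * y) = v x + v y
  min_le_v_add : ∀ ⦃x y : K⦄, x ≠ 0 → y ≠ 0 → x + y ≠ 0 → min (v x) (v y) ≤ v (x + y)
  v_surj : ∀ m : ℤ, ∃ x : K, x ≠ 0 ∧ v x = m

namespace DValuation

variable {K : Type*} [Field K] (w : DValuation K)

/-- `u ∈ U_m` : `u` is (a unit) congruent to `1` modulo `𝔭^m`; for `m ≥ 1`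
this forces `v u = 0`, i.e. `u ∈ 𝔬^×`. -/
def IsUnit₁ (m : ℤ) (u : K) : Prop :=
  u = 1 ∨ m ≤ w.v (u - 1)

end DValuation

/-
Let `s ↦ χ (1 + s)` detect `χ` on the last layer `v s = γ` on which it is nontrivial. Taking
`x = -e₁ / s` the factors `x - e₁` and `x - e₂` are `x (1 + s)` and `x` times a unit close to
`1 + s`, so a suitable `s` produces `(0, 1)`. If `χ e₁ = 1`, the torsion point `(e₁, 0)` produces a
pair `(1, b)`. Otherwise take `x = e₁ (1 + s)` with `s t = (e₁ - e₂) / e₁`, for which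
`x - e₁ = e₁ s` and `x - e₂ = e₁ s (1 + t)`; what is needed is a factorization of
`(e₁ - e₂) / e₁` with `χ (1 + s) = χ (1 + t) = 1`. When `v (e₁ - e₂) = γ ^ 2 v e₁` this is a
question about an additive character of the finite residue field, settled by counting; when
`v (e₁ - e₂)` is larger, `t` can be changed by a factor in the last layer without affecting
`χ (1 + s)`.
-/

open IsLocalRing Module
open scoped TensorProduct WithZero

theorem zmodTwo_eq_one_of_ne_zero {x : ZMod 2} (hx : x ≠ 0) : x = 1 :=
  Fin.eq_one_of_ne_zero x hx

-- Otherwise `a ↦ δ / a + s` maps `{a | ψ a = 1}` injectively into itself and misses `s`.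
theorem exists_mul_eq_and_eq_one_of_finite {k : Type*} [Field k] [Finite k] (ψ : k →+ ZMod 2)
    {s : k} (hs : ψ s = 1) {δ : k} (hδ : δ ≠ 0) :
    ∃ a b, a * b = δ ∧ ψ a = 1 ∧ ψ b = 1 := by
  by_contra! h
  let S := {a : k // ψ a = 1}
  have hS (a : S) : (a : k) ≠ 0 := by
    intro h0
    simpa [h0] using a.2
  have hzero (a : S) : ψ (δ / a) = 0 := by
    by_contra hne
    exact h a (δ / a) (mul_div_cancel₀ δ (hS a)) a.2 (zmodTwo_eq_one_of_ne_zero hne)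
  let shift (a : S) : S := ⟨δ / a + s, by rw [map_add, hzero, hs, zero_add]⟩
  have hinj : shift.Injective := fun a b hab ↦ Subtype.ext <| by
    have : δ / a.1 = δ / b.1 := add_right_cancel (congrArg Subtype.val hab)
    simpa [div_eq_mul_inv, hδ] using this
  obtain ⟨a, ha⟩ := Finite.surjective_of_injective hinj ⟨s, hs⟩
  have : δ / a.1 = 0 := by simpa [shift] using congrArg Subtype.val ha
  exact div_ne_zero hδ (hS a) this

theorem exists_mul_eq_and_eq_one_of_isUnit {R : Type*} [CommRing R] [IsLocalRing R]
    [Finite (ResidueField R)] (ψ : R →+ ZMod 2) (hψ : ∀ x ∈ maximalIdeal R, ψ x = 0)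
    {s : R} (hs : ψ s = 1) {δ : R} (hδ : IsUnit δ) :
    ∃ a b, a * b = δ ∧ ψ a = 1 ∧ ψ b = 1 := by
  let ψbar : ResidueField R →+ ZMod 2 :=
    QuotientAddGroup.lift (maximalIdeal R).toAddSubgroup ψ hψ
  have hψbar (x : R) : ψbar (residue R x) = ψ x := rfl
  obtain ⟨a', b', hab, ha', hb'⟩ := exists_mul_eq_and_eq_one_of_finite ψbar
    ((hψbar s).trans hs) ((residue_ne_zero_iff_isUnit δ).2 hδ)
  obtain ⟨a, rfl⟩ := residue_surjective a'
  obtain ⟨a, rfl⟩ : IsUnit a := (residue_ne_zero_iff_isUnit a).1 <| left_ne_zero_of_mul <|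
    hab ▸ (residue_ne_zero_iff_isUnit δ).2 hδ
  refine ⟨a, ↑a⁻¹ * δ, a.mul_inv_cancel_left δ, ha', ?_⟩
  rwa [← hψbar, map_mul, ← hab, ← mul_assoc, ← map_mul, a.inv_mul, map_one, one_mul]

theorem module_finite_residueField_of_flat {R A : Type*} (F K : Type*) [CommRing R] [IsDomain R]
    [IsLocalRing R] [CommRing A] [IsLocalRing A] [Algebra R A] [Module.Flat R A]
    [IsLocalHom (algebraMap R A)] [Field F] [Algebra R F] [IsFractionRing R F]
    [Field K] [Algebra F K] [FiniteDimensional F K] [Algebra A K] [FaithfulSMul A K]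
    [Algebra R K] [IsScalarTower R F K] [IsScalarTower R A K] :
    Module.Finite (ResidueField R) (ResidueField A) := by
  let b := Basis.ofVectorSpace (ResidueField R) (ResidueField A)
  choose c hc using fun i ↦ residue_surjective (b i)
  let reduction : ResidueField R ⊗[R] A →ₐ[ResidueField R] ResidueField A :=
    Algebra.TensorProduct.lift (Algebra.ofId _ _) (IsScalarTower.toAlgHom R A (ResidueField A))
      fun _ _ ↦ .all _ _
  have hreduction : reduction.toLinearMap ∘ TensorProduct.mk R (ResidueField R) A 1 ∘ c = b :=
    funext fun i ↦ by simp [reduction, ← hc i]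
  have hR : LinearIndependent R c := Module.IsLocalRing.linearIndependent_of_flat c <|
    .of_comp reduction.toLinearMap (hreduction ▸ b.linearIndependent)
  have hF : LinearIndependent F (algebraMap A K ∘ c) :=
    (LinearIndependent.iff_fractionRing R F).1 <|
      hR.map' (IsScalarTower.toAlgHom R A K).toLinearMap <|
        LinearMap.ker_eq_bot.2 (FaithfulSMul.algebraMap_injective A K)
  have := hF.finite
  exact .of_basis b

section ResidueField

variable {F K Γ₀ : Type*} [Field F] [Field K] [Algebra F K]
  [LinearOrderedCommGroupWithZero Γ₀] (v : Valuation K Γ₀) [v.IsNontrivial]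

theorem exists_one_lt_valuation_algebraMap [Algebra.IsAlgebraic F K] :
    ∃ x : F, 1 < v (algebraMap F K x) := by
  by_contra! h
  let A : Subalgebra F K := { v.valuationSubring with algebraMap_mem' := h }
  obtain ⟨x, hx0, hx⟩ := Valuation.IsNontrivial.exists_lt_one (v := v)
  have hinv : v x⁻¹ ≤ 1 :=
    A.inv_mem_of_algebraic (x := ⟨x, hx.le⟩) (Algebra.IsAlgebraic.isAlgebraic x)
  rw [map_inv₀, inv_le_one₀ (zero_lt_iff.2 (v.ne_zero_iff.2 hx0))] at hinv
  exact hinv.not_gt hx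

variable {R : Type*} [CommRing R] [IsDomain R] [IsDiscreteValuationRing R]
  [Algebra R F] [IsFractionRing R F] [Algebra R K] [IsScalarTower R F K]

include F in
theorem valuation_algebraMap_irreducible_lt_one [Algebra.IsAlgebraic F K]
    (hR : ∀ r : R, v (algebraMap R K r) ≤ 1) {ϖ : R} (hϖ : Irreducible ϖ) :
    v (algebraMap R K ϖ) < 1 := by
  refine (hR ϖ).lt_of_ne fun hϖ1 ↦ ?_
  obtain ⟨x, hx⟩ := exists_one_lt_valuation_algebraMap (F := F) v
  obtain ⟨a, b, hb, rfl⟩ := IsFractionRing.div_surjective (A := R) x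
  obtain ⟨n, u, rfl⟩ :=
    IsDiscreteValuationRing.eq_unit_mul_pow_irreducible (nonZeroDivisors.ne_zero hb) hϖ
  have hu : v (algebraMap R K u) = 1 := Valuation.Integers.one_of_isUnit' u.isUnit hR
  refine hx.not_ge ?_
  simpa [← IsScalarTower.algebraMap_apply, hu, hϖ1] using hR a

variable [FiniteDimensional F K] [Finite (ResidueField R)]

include F in
theorem finite_residueField_valuationSubring
    (hR : ∀ r : R, v (algebraMap R K r) ≤ 1) : Finite (ResidueField v.valuationSubring) := by
  let _ : Algebra R v.valuationSubring := ((algebraMap R K).codRestrict _ hR).toAlgebra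
  have : IsScalarTower R v.valuationSubring K := .of_algebraMap_eq fun _ ↦ rfl
  have : IsLocalHom (algebraMap R v.valuationSubring) := by
    obtain ⟨ϖ, hϖ⟩ := IsDiscreteValuationRing.exists_irreducible R
    refine ((local_hom_TFAE _).out 0 2).2 ?_
    rw [hϖ.maximalIdeal_eq, Ideal.map_span, Set.image_singleton,
      Ideal.span_singleton_le_iff_mem, Valuation.mem_maximalIdeal_iff]
    exact valuation_algebraMap_irreducible_lt_one (F := F) v hR hϖ
  have hRK : Function.Injective (algebraMap R K) := by
    rw [IsScalarTower.algebraMap_eq R F K]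
    exact (algebraMap F K).injective.comp (IsFractionRing.injective R F)
  have : Module.IsTorsionFree R v.valuationSubring :=
    isTorsionFree_iff_algebraMap_injective.2 <| .of_comp (f := Subtype.val) hRK
  have := module_finite_residueField_of_flat (R := R) (A := v.valuationSubring) F K
  exact Module.finite_of_finite (ResidueField R)

end ResidueField

section OneUnits

variable {K Γ₀ : Type*} [Field K] [LinearOrderedCommGroupWithZero Γ₀] {v : Valuation K Γ₀}

theorem one_add_ne_zero_of_valuation_lt_one {s : K} (hs : v s < 1) : 1 + s ≠ 0 :=
  v.ne_zero_iff.1 ((v.map_one_add_of_lt hs).trans_ne one_ne_zero)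

theorem valuation_eq_one_of_sub_one_lt {x : K} (hx : v (x - 1) < 1) : v x = 1 := by
  simpa only [add_sub_cancel] using v.map_one_add_of_lt hx

theorem valuation_div_sub_one_lt {x y : K} (hx : v (x - 1) < 1) (hy : v (y - 1) < 1) :
    v (x / y - 1) < 1 := by
  have hvy : v y = 1 := valuation_eq_one_of_sub_one_lt hy
  rw [div_sub_one (v.ne_zero_iff.1 (hvy.trans_ne one_ne_zero)), map_div₀, hvy, div_one,
    ← sub_sub_sub_cancel_right x y 1]
  exact v.map_sub_lt hx hy

end OneUnits

section Character

variable {K Γ₀ : Type*} [Field K] [LinearOrderedCommGroupWithZero Γ₀] {v : Valuation K Γ₀}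
  {χ : K → ZMod 2}

/-- The set `Im` of the paper. The first four pairs are the values at the points where
`x * (x - e₁) * (x - e₂)` has a zero or a pole, the others are read off from a coordinate `x` at
which this product is a norm. -/
def descentImage (χ : K → ZMod 2) (e₁ e₂ : K) : Set (ZMod 2 × ZMod 2) :=
  {(0, 0), (χ (e₁ * e₂), χ (-e₁)), (χ e₁, χ (e₁ * (e₁ - e₂))), (χ e₂, χ (e₂ - e₁))} ∪
    {p | ∃ x : K, x ≠ 0 ∧ x ≠ e₁ ∧ x ≠ e₂ ∧ χ (x * (x - e₁) * (x - e₂)) = 0 ∧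
      p = (χ x, χ (x - e₁))}

variable (hχ : ∀ ⦃x y : K⦄, x ≠ 0 → y ≠ 0 → χ (x * y) = χ x + χ y)
include hχ

theorem character_one : χ 1 = 0 := by
  simpa using hχ one_ne_zero one_ne_zero

theorem character_inv {x : K} (hx : x ≠ 0) : χ x⁻¹ = χ x := by
  rw [← CharTwo.add_eq_zero, ← hχ (inv_ne_zero hx) hx, inv_mul_cancel₀ hx, character_one hχ]

theorem character_div {x y : K} (hx : x ≠ 0) (hy : y ≠ 0) : χ (x / y) = χ x + χ y := by
  rw [div_eq_mul_inv, hχ hx (inv_ne_zero hy), character_inv hχ hy]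

theorem character_eq_of_valuation_sub_lt {γ : Γ₀} (hγ : γ ≤ 1)
    (hvan : ∀ u : K, v (u - 1) < γ → χ u = 0) {x y : K} (hxy : v (y - x) < γ * v x) :
    χ y = χ x := by
  have hx : x ≠ 0 := by rintro rfl; simp at hxy
  have hvy : v y = v x := by
    have := v.map_add_eq_of_lt_left (hxy.trans_le (mul_le_of_le_one_left' hγ))
    rwa [add_sub_cancel] at this
  have hy : y ≠ 0 := by rwa [← v.ne_zero_iff, hvy, v.ne_zero_iff]
  rw [← CharTwo.add_eq_zero, ← character_div hχ hy hx]
  refine hvan _ ?_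
  rwa [div_sub_one hx, map_div₀, div_lt_iff₀ (v.pos_iff.2 hx)]

theorem character_one_add_eq_of_valuation_sub_lt {γ : Γ₀} (hγ : γ ≤ 1)
    (hvan : ∀ u : K, v (u - 1) < γ → χ u = 0) {s t : K} (hs : v s < 1) (hst : v (t - s) < γ) :
    χ (1 + t) = χ (1 + s) :=
  character_eq_of_valuation_sub_lt hχ hγ hvan <| by
    rwa [add_sub_add_left_eq_sub, v.map_one_add_of_lt hs, mul_one]

theorem mem_descentImage_of_sub_eq {e₁ e₂ x y z : K} {i j : ZMod 2} (hx : x ≠ 0) (hy : y ≠ 0)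
    (hz : z ≠ 0) (hxy : x - e₁ = y) (hxz : x - e₂ = z) (hχx : χ x = i) (hχy : χ y = j)
    (hχz : χ z = i + j) : (i, j) ∈ descentImage χ e₁ e₂ := by
  subst hxy hxz hχx hχy
  refine .inr ⟨x, hx, sub_ne_zero.1 hy, sub_ne_zero.1 hz, ?_, rfl⟩
  rw [hχ (mul_ne_zero hx hy) hz, hχ hx hy, hχz, CharTwo.add_self_eq_zero]

variable {z : K} (hz : v z < 1) (hvan : ∀ u : K, v (u - 1) < v z → χ u = 0) (hχz : χ (1 + z) = 1)
include hχz

theorem ne_zero_of_character_one_add : z ≠ 0 := by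
  rintro rfl
  simp [character_one hχ] at hχz

include hvan hz

theorem character_one_add_mul_one_add : χ (1 + z * (1 + z)) = 1 := by
  have hz0 := v.pos_iff.2 (ne_zero_of_character_one_add hχ hχz)
  rw [character_one_add_eq_of_valuation_sub_lt hχ hz.le hvan hz, hχz]
  rw [mul_one_add, add_sub_cancel_left, map_mul]
  exact mul_lt_of_lt_one_right hz0 hz

-- Passing from `z` to `z * (1 + z)` keeps the first two properties and flips `χ (c * z)`.
theorem exists_character_mul_eq_zero {c : K} (hc : c ≠ 0) :
    ∃ s, v s = v z ∧ χ (1 + s) = 1 ∧ χ (c * s) = 0 := by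
  have hz0 := ne_zero_of_character_one_add hχ hχz
  rcases eq_or_ne (χ (c * z)) 0 with h | h
  · exact ⟨z, rfl, hχz, h⟩
  · refine ⟨z * (1 + z), by rw [map_mul, v.map_one_add_of_lt hz, mul_one],
      character_one_add_mul_one_add hχ hz hvan hχz, ?_⟩
    rw [← mul_assoc, hχ (mul_ne_zero hc hz0) (one_add_ne_zero_of_valuation_lt_one hz),
      hχz, zmodTwo_eq_one_of_ne_zero h, CharTwo.add_self_eq_zero]

theorem exists_character_one_add_ne (a : K) : ∃ s, v s = v z ∧ χ (1 + s) = 1 ∧ s ≠ a := by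
  have hz0 := ne_zero_of_character_one_add hχ hχz
  rcases ne_or_eq z a with h | rfl
  · exact ⟨z, rfl, hχz, h⟩
  · exact ⟨z * (1 + z), by rw [map_mul, v.map_one_add_of_lt hz, mul_one],
      character_one_add_mul_one_add hχ hz hvan hχz, by simp [hz0]⟩

theorem exists_mul_eq_of_valuation_eq_sq [Finite (ResidueField v.valuationSubring)] {D : K}
    (hD : v D = v z ^ 2) :
    ∃ s t, s * t = D ∧ 1 + s ≠ 0 ∧ 1 + t ≠ 0 ∧ χ (1 + s) = 1 ∧ χ (1 + t) = 1 := by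
  have hz0 := ne_zero_of_character_one_add hχ hχz
  have hvz0 : v z ≠ 0 := v.ne_zero_iff.2 hz0
  have hlt (a : v.valuationSubring) : v (a * z) < 1 := by
    rw [map_mul]
    exact mul_lt_one_of_nonneg_of_lt_one_right a.2 zero_le hz
  have hne (a : v.valuationSubring) : 1 + a * z ≠ 0 :=
    one_add_ne_zero_of_valuation_lt_one (hlt a)
  let ψ : v.valuationSubring →+ ZMod 2 := AddMonoidHom.mk' (fun a ↦ χ (1 + a * z)) fun a b ↦ by
    have hmul : (1 + a * z) * (1 + b * z) =
        1 + ((a + b : v.valuationSubring) * z + a * z * (b * z)) := by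
      push_cast
      ring
    rw [← hχ (hne a) (hne b), hmul]
    refine (character_one_add_eq_of_valuation_sub_lt hχ hz.le hvan (hlt (a + b)) ?_).symm
    rw [add_sub_cancel_left, map_mul, map_mul v b.1, ← mul_assoc]
    exact mul_lt_of_lt_one_left (zero_lt_iff.2 hvz0) (mul_lt_one_of_lt_of_le (hlt a) b.2)
  have hψ (a) (ha : a ∈ maximalIdeal v.valuationSubring) : ψ a = 0 := by
    refine hvan _ ?_
    rw [add_sub_cancel_left, map_mul]
    exact mul_lt_of_lt_one_left (zero_lt_iff.2 hvz0) (v.mem_maximalIdeal_iff.1 ha)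
  have hvδ : v (D / z ^ 2) = 1 := by rw [map_div₀, map_pow, hD, div_self (pow_ne_zero 2 hvz0)]
  let δ : v.valuationSubring := ⟨D / z ^ 2, hvδ.le⟩
  have hδ : IsUnit δ :=
    (Valuation.valuationSubring.integers v).isUnit_iff_valuation_eq_one.2 hvδ
  obtain ⟨a, b, hab, ha, hb⟩ := exists_mul_eq_and_eq_one_of_isUnit ψ hψ
    (s := 1) (by simpa [ψ] using hχz) hδ
  refine ⟨a * z, b * z, ?_, hne a, hne b, ha, hb⟩
  have hab' : (a * b : K) = D / z ^ 2 := congrArg Subtype.val hab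
  rw [mul_mul_mul_comm, hab', ← sq, div_mul_cancel₀ _ (pow_ne_zero 2 hz0)]

theorem exists_mul_eq_mul_of_valuation_lt {s t : K} (hs : v s = v z) (hχs : χ (1 + s) = 1)
    (hst : v s < v t) (ht1 : 1 + t ≠ 0) (hχt : χ (1 + t) = 0) :
    ∃ s' t', s' * t' = s * t ∧ 1 + s' ≠ 0 ∧ 1 + t' ≠ 0 ∧ χ (1 + s') = 1 ∧ χ (1 + t') = 1 := by
  have hne {s : K} (hs : v s = v z) : 1 + s ≠ 0 :=
    one_add_ne_zero_of_valuation_lt_one (hs.trans_lt hz)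
  have hs0 : 0 < v s := hs ▸ v.pos_iff.2 (ne_zero_of_character_one_add hχ hχz)
  have ht0 : 0 < v t := hs0.trans hst
  have hδ : v (z * (1 + t)) < v t := by
    rw [mul_add, mul_one]
    exact v.map_add_lt (hs ▸ hst) (by simpa only [map_mul] using mul_lt_of_lt_one_left ht0 hz)
  set t' := t + z * (1 + t) with ht'
  have hvt' : v t' = v t := v.map_add_eq_of_lt_left hδ
  have ht'0 : t' ≠ 0 := v.pos_iff.1 (hvt'.symm ▸ ht0)
  have ht'1 : 1 + t' = (1 + z) * (1 + t) := by rw [ht']; ring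
  have hs' : v (s * t / t') = v s := by
    rw [map_div₀, map_mul, hvt', mul_div_cancel_right₀ _ ht0.ne']
  refine ⟨s * t / t', t', div_mul_cancel₀ _ ht'0, hne (hs'.trans hs), ?_, ?_, ?_⟩
  · exact ht'1 ▸ mul_ne_zero (hne rfl) ht1
  · rw [character_one_add_eq_of_valuation_sub_lt hχ hz.le hvan (hs.trans_lt hz), hχs]
    have hdiff : s * t / t' - s = -(s * (z * (1 + t)) / t') := by field_simp; rw [ht']; ring
    rw [hdiff, v.map_neg, map_div₀, hvt', map_mul, mul_div_assoc, ← hs]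
    exact mul_lt_of_lt_one_right hs0 ((div_lt_one₀ ht0).2 hδ)
  · rw [ht'1, hχ (hne rfl) ht1, hχz, hχt, add_zero]

theorem exists_mul_eq_of_sq_lt_valuation {D : K} (hD : v z ^ 2 < v D) :
    ∃ s t, s * t = D ∧ 1 + s ≠ 0 ∧ 1 + t ≠ 0 ∧ χ (1 + s) = 1 ∧ χ (1 + t) = 1 := by
  have hz0 : 0 < v z := v.pos_iff.2 (ne_zero_of_character_one_add hχ hχz)
  obtain ⟨s, hs, hχs, hsD⟩ := exists_character_one_add_ne hχ hz hvan hχz (-D)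
  have hs0 : s ≠ 0 := v.pos_iff.1 (hs ▸ hz0)
  have hst : s * (D / s) = D := mul_div_cancel₀ D hs0
  have hvt : v s < v (D / s) := by rwa [map_div₀, hs, lt_div_iff₀ hz0, ← sq]
  have ht1 : 1 + D / s ≠ 0 := fun h ↦ hsD (by linear_combination s * h - hst)
  rcases eq_or_ne (χ (1 + D / s)) 0 with hχt | hχt
  · simpa only [hst] using exists_mul_eq_mul_of_valuation_lt hχ hz hvan hχz hs hχs hvt ht1 hχt
  · exact ⟨s, D / s, hst, one_add_ne_zero_of_valuation_lt_one (hs.trans_lt hz), ht1, hχs,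
      zmodTwo_eq_one_of_ne_zero hχt⟩

theorem exists_mul_eq_of_sq_le_valuation [Finite (ResidueField v.valuationSubring)] {D : K}
    (hD : v z ^ 2 ≤ v D) :
    ∃ s t, s * t = D ∧ 1 + s ≠ 0 ∧ 1 + t ≠ 0 ∧ χ (1 + s) = 1 ∧ χ (1 + t) = 1 :=
  hD.eq_or_lt.elim (fun h ↦ exists_mul_eq_of_valuation_eq_sq hχ hz hvan hχz h.symm)
    (exists_mul_eq_of_sq_lt_valuation hχ hz hvan hχz)

theorem zero_one_mem_descentImage {e₁ e₂ : K} (he : v (e₁ - e₂) < v e₁) :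
    (0, 1) ∈ descentImage χ e₁ e₂ := by
  have hz0 : 0 < v z := v.pos_iff.2 (ne_zero_of_character_one_add hχ hχz)
  have he₁ : e₁ ≠ 0 := v.pos_iff.1 (zero_le.trans_lt he)
  have hne₁ : -e₁ ≠ 0 := neg_ne_zero.2 he₁
  obtain ⟨s, hs, hχs, hχes⟩ := exists_character_mul_eq_zero hχ hz hvan hχz hne₁
  have hs0 : s ≠ 0 := v.pos_iff.1 (hs ▸ hz0)
  have hs1 : v s < 1 := hs.trans_lt hz
  have hdiff : v (s * (e₂ / e₁) - s) < v z := by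
    rw [← mul_sub_one, div_sub_one he₁, map_mul, map_div₀, v.map_sub_swap, hs]
    exact mul_lt_of_lt_one_right hz0 ((div_lt_one₀ (v.pos_iff.2 he₁)).2 he)
  have ht1 : v (s * (e₂ / e₁)) < 1 := by
    simpa only [add_sub_cancel] using v.map_add_lt hs1 (hdiff.trans hz)
  have hχt : χ (1 + s * (e₂ / e₁)) = 1 :=
    (character_one_add_eq_of_valuation_sub_lt hχ hz.le hvan hs1 hdiff).trans hχs
  have hx : -e₁ / s ≠ 0 := div_ne_zero hne₁ hs0
  have hχx : χ (-e₁ / s) = 0 := by rw [character_div hχ hne₁ hs0, ← hχ hne₁ hs0, hχes]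
  have hχx_mul {a : K} (ha : v a < 1) (hχa : χ (1 + a) = 1) : χ (-e₁ / s * (1 + a)) = 1 := by
    rw [hχ hx (one_add_ne_zero_of_valuation_lt_one ha), hχx, hχa, zero_add]
  refine mem_descentImage_of_sub_eq hχ hx
    (mul_ne_zero hx (one_add_ne_zero_of_valuation_lt_one hs1))
    (mul_ne_zero hx (one_add_ne_zero_of_valuation_lt_one ht1)) ?_ ?_ hχx (hχx_mul hs1 hχs)
    ((hχx_mul ht1 hχt).trans (zero_add 1).symm)
  all_goals
    field_simp
    ring

theorem exists_one_mem_descentImage [Finite (ResidueField v.valuationSubring)] {e₁ e₂ : K}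
    (he₁ : e₁ ≠ 0) (he : v z ^ 2 * v e₁ ≤ v (e₁ - e₂)) :
    ∃ b, (1, b) ∈ descentImage χ e₁ e₂ := by
  rcases eq_or_ne (χ e₁) 0 with hχe | hχe
  · have hD : v z ^ 2 ≤ v ((e₁ - e₂) / e₁) := by rwa [map_div₀, le_div_iff₀ (v.pos_iff.2 he₁)]
    obtain ⟨s, t, hst, hs1, ht1, hχs, hχt⟩ := exists_mul_eq_of_sq_le_valuation hχ hz hvan hχz hD
    have hz0 : 0 < v z := v.pos_iff.2 (ne_zero_of_character_one_add hχ hχz)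
    have hs0 : s ≠ 0 := left_ne_zero_of_mul (hst ▸ v.pos_iff.1 ((pow_pos hz0 2).trans_le hD))
    have hy : e₁ * s ≠ 0 := mul_ne_zero he₁ hs0
    refine ⟨χ (e₁ * s), mem_descentImage_of_sub_eq hχ (x := e₁ * (1 + s)) (z := e₁ * s * (1 + t))
      (mul_ne_zero he₁ hs1) hy (mul_ne_zero hy ht1) (by ring) ?_ ?_ rfl ?_⟩
    · rw [eq_div_iff he₁] at hst
      linear_combination -hst
    · rw [hχ he₁ hs1, hχe, hχs, zero_add]
    · rw [hχ hy ht1, hχt, add_comm]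
  · exact ⟨_, .inl <| .inr <| .inr <| .inl <|
      congrArg (·, _) (zmodTwo_eq_one_of_ne_zero hχe).symm⟩

end Character

theorem addSubgroup_closure_eq_top_of_mem {m : ℕ} {S : Set (ZMod m × ZMod m)} {b : ZMod m}
    (h₁ : (0, 1) ∈ S) (h₂ : (1, b) ∈ S) : AddSubgroup.closure S = ⊤ := by
  refine (AddSubgroup.eq_top_iff' _).2 fun p ↦ ?_
  have hp : p = (p.1.cast : ℤ) • (1, b) + ((p.2 - p.1 * b).cast : ℤ) • (0, 1) := by
    ext <;> simp
  rw [hp]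
  exact add_mem (zsmul_mem (AddSubgroup.subset_closure h₂) _)
    (zsmul_mem (AddSubgroup.subset_closure h₁) _)

theorem chatelet_descent_image_case_iii_general {K Γ₀ : Type*} [Field K]
    [LinearOrderedCommGroupWithZero Γ₀] (v : Valuation K Γ₀)
    [Finite (ResidueField v.valuationSubring)] (χ : K → ZMod 2)
    (hχ : ∀ ⦃x y : K⦄, x ≠ 0 → y ≠ 0 → χ (x * y) = χ x + χ y) {γ : Γ₀} (hγ : γ < 1)
    (hvan : ∀ u : K, v (u - 1) < γ → χ u = 0) (hnonvan : ∃ u : K, v (u - 1) ≤ γ ∧ χ u ≠ 0)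
    (e₁ e₂ : K) (he : v (e₁ / e₂ - 1) < 1) (hcong : γ ^ 2 ≤ v (e₁ / e₂ - 1)) :
    AddSubgroup.closure (descentImage χ e₁ e₂) = ⊤ := by
  obtain ⟨u, hu, hχu⟩ := hnonvan
  obtain ⟨z, rfl⟩ : ∃ z, u = 1 + z := ⟨u - 1, (add_sub_cancel 1 u).symm⟩
  rw [add_sub_cancel_left] at hu
  obtain rfl : v z = γ := hu.eq_of_not_lt fun h ↦ hχu <| hvan _ <| by rwa [add_sub_cancel_left]
  have hχz : χ (1 + z) = 1 := zmodTwo_eq_one_of_ne_zero hχu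
  have hratio : v (e₁ / e₂) = 1 := valuation_eq_one_of_sub_one_lt he
  obtain ⟨he₁, he₂⟩ : e₁ ≠ 0 ∧ e₂ ≠ 0 :=
    div_ne_zero_iff.1 (v.ne_zero_iff.1 (hratio.trans_ne one_ne_zero))
  have hv₁ : 0 < v e₁ := v.pos_iff.2 he₁
  have hv₁₂ : v e₁ = v e₂ := by rwa [map_div₀, div_eq_one_iff_eq (v.ne_zero_iff.2 he₂)] at hratio
  rw [div_sub_one he₂, map_div₀, ← hv₁₂] at he hcong
  rw [div_lt_one₀ hv₁] at he
  rw [le_div_iff₀ hv₁] at hcong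
  obtain ⟨b, hb⟩ := exists_one_mem_descentImage hχ hγ hvan hχz he₁ hcong
  exact addSubgroup_closure_eq_top_of_mem (zero_one_mem_descentImage hχ hγ hvan hχz he) hb

namespace DValuation

open WithZero

variable {K : Type*} [Field K] (w : DValuation K)

theorem v_one : w.v 1 = 0 := by
  simpa using w.v_mul one_ne_zero one_ne_zero

open scoped Classical in
/-- The multiplicatively written valuation `x ↦ exp (-w.v x)` of `w`. -/
noncomputable def valuation : Valuation K ℤᵐ⁰ where
  toFun x := if x = 0 then 0 else exp (-w.v x)
  map_zero' := by simp
  map_one' := by simp [w.v_one]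
  map_mul' x y := by split_ifs <;> simp_all [w.v_mul, add_comm]
  map_add_le_max' x y := by
    obtain rfl | hx := eq_or_ne x 0
    · simp
    obtain rfl | hy := eq_or_ne y 0
    · simp
    obtain hxy | hxy := eq_or_ne (x + y) 0
    · simp [hxy]
    simpa [hx, hy, hxy, or_comm, -exp_neg] using w.min_le_v_add hx hy hxy

theorem valuation_of_ne_zero {x : K} (hx : x ≠ 0) : w.valuation x = exp (-w.v x) := if_neg hx

theorem isUnit₁_iff {m : ℤ} {u : K} : w.IsUnit₁ m u ↔ w.valuation (u - 1) ≤ exp (-m) := by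
  rcases eq_or_ne u 1 with rfl | hu
  · simp [IsUnit₁]
  · simp [IsUnit₁, hu, w.valuation_of_ne_zero (sub_ne_zero.2 hu), -exp_neg]

theorem isUnit₁_add_one_iff {m : ℤ} {u : K} :
    w.IsUnit₁ (m + 1) u ↔ w.valuation (u - 1) < exp (-m) := by
  rcases eq_or_ne u 1 with rfl | hu
  · simp [IsUnit₁]
  · simp [IsUnit₁, hu, w.valuation_of_ne_zero (sub_ne_zero.2 hu), -exp_neg]

instance : w.valuation.IsNontrivial where
  exists_val_nontrivial := by
    obtain ⟨x, hx, hwx⟩ := w.v_surj 1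
    refine ⟨x, ?_, ?_⟩ <;> simp [w.valuation_of_ne_zero hx, hwx]

section Padic

variable {p : ℕ} [Fact p.Prime] [Algebra ℚ_[p] K] {c : ℤ}
  (hext : ∀ x : ℚ_[p], x ≠ 0 → w.v (algebraMap ℚ_[p] K x) = c * x.valuation)
include hext

theorem valuation_algebraMap_padicInt_le_one (x : ℤ_[p]) :
    w.valuation (algebraMap ℚ_[p] K x) ≤ 1 := by
  rcases eq_or_ne x 0 with rfl | hx
  · simp
  have hp0 : (p : ℚ_[p]) ≠ 0 := mod_cast (Fact.out : p.Prime).ne_zero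
  have hp : w.valuation (algebraMap ℚ_[p] K p) ≤ 1 := by
    rw [map_natCast]
    exact natCast_mem w.valuation.valuationSubring p
  have hx0 : (x : ℚ_[p]) ≠ 0 := PadicInt.coe_ne_zero.2 hx
  rw [w.valuation_of_ne_zero ((map_ne_zero _).2 hp0), hext _ hp0, Padic.valuation_p, mul_one,
    ← exp_zero, exp_le_exp, neg_nonpos] at hp
  rw [w.valuation_of_ne_zero ((map_ne_zero _).2 hx0), hext _ hx0, PadicInt.valuation_coe,
    ← exp_zero, exp_le_exp, neg_nonpos]
  positivity

theorem finite_residueField [FiniteDimensional ℚ_[p] K] :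
    Finite (ResidueField w.valuation.valuationSubring) := by
  let _ : Algebra ℤ_[p] K := .compHom K (algebraMap ℤ_[p] ℚ_[p])
  have : IsScalarTower ℤ_[p] ℚ_[p] K := .of_algebraMap_eq fun _ ↦ rfl
  exact finite_residueField_valuationSubring (R := ℤ_[p]) (F := ℚ_[p]) w.valuation
    (w.valuation_algebraMap_padicInt_le_one hext)

end Padic

theorem closure_descentImage_eq_top [Finite (ResidueField w.valuation.valuationSubring)]
    {χ : K → ZMod 2} (hχ : ∀ ⦃x y : K⦄, x ≠ 0 → y ≠ 0 → χ (x * y) = χ x + χ y) {n : ℕ}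
    (hn : 1 ≤ n) (hvan : ∀ u : K, w.IsUnit₁ ((n : ℤ) + 1) u → χ u = 0)
    (hnonvan : ∃ u : K, w.IsUnit₁ (n : ℤ) u ∧ χ u ≠ 0) {e₁ e₂ : K} (he₁ : w.IsUnit₁ 1 e₁)
    (he₂ : w.IsUnit₁ 1 e₂) (hcong : ¬ w.IsUnit₁ (2 * (n : ℤ) + 1) (e₁ / e₂)) :
    AddSubgroup.closure (descentImage χ e₁ e₂) = ⊤ := by
  have hU₁ {u : K} (hu : w.IsUnit₁ 1 u) : w.valuation (u - 1) < 1 :=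
    w.isUnit₁_add_one_iff (m := 0).1 hu
  have hγ : exp (-n : ℤ) < 1 := by rw [← exp_zero, exp_lt_exp]; lia
  refine chatelet_descent_image_case_iii_general w.valuation χ hχ hγ
    (fun u hu ↦ hvan u (w.isUnit₁_add_one_iff.2 hu))
    (hnonvan.imp fun u ↦ And.imp_left w.isUnit₁_iff.1) e₁ e₂
    (valuation_div_sub_one_lt (hU₁ he₁) (hU₁ he₂)) ?_
  rw [w.isUnit₁_add_one_iff, not_lt, ← mul_neg] at hcong
  rwa [← exp_nsmul, nsmul_eq_mul, Nat.cast_ofNat]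

end DValuation

/-- Case (iii) of Proposition 4:  `K` a finite extension of `ℚ₂` with
normalized valuation `v`, `L = K(√d)` a ramified quadratic extension,
`χ : K^× → ℤ/2ℤ` the homomorphism with kernel `N_{L|K}(L^×)`, factoring
through `U₁/U_{n+1}` but not through `U₁/U_n` (`n ≥ 1`), and `e₁, e₂`
distinct `1`-units.  If `e₁/e₂ ∉ U_{2n+1}`, the subgroup of `(ℤ/2ℤ)²`
generated by the image set `Im` is all of `(ℤ/2ℤ)²`. -/
theorem chatelet_descent_image_case_iii
    (K : Type*) [Field K] [Algebra ℚ_[2] K] [FiniteDimensional ℚ_[2] K]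
    (w : DValuation K)
    (hext : ∀ x : ℚ_[2], x ≠ 0 →
      w.v (algebraMap ℚ_[2] K x) = w.v (algebraMap ℚ_[2] K 2) * x.valuation)
    (L : Type*) [Field L] [Algebra K L] (hL2 : Module.finrank K L = 2)
    (d : K) (hd0 : d ≠ 0) (hd : ¬ IsSquare d)
    (hdL : ∃ δ : L, δ ^ 2 = algebraMap K L d)
    (wL : DValuation L)
    (hram : ∀ x : K, x ≠ 0 → wL.v (algebraMap K L x) = 2 * w.v x)
    (χ : K → ZMod 2)
    (hχ : ∀ ⦃x y : K⦄, x ≠ 0 → y ≠ 0 → χ (x * y) = χ x + χ y)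
    (hker : ∀ x : K, x ≠ 0 → (χ x = 0 ↔ ∃ y : L, y ≠ 0 ∧ Algebra.norm K y = x))
    (n : ℕ) (hn : 1 ≤ n)
    (hvan : ∀ u : K, w.IsUnit₁ ((n : ℤ) + 1) u → χ u = 0)
    (hnonvan : ∃ u : K, w.IsUnit₁ (n : ℤ) u ∧ χ u ≠ 0)
    (e₁ e₂ : K) (he₁ : w.IsUnit₁ 1 e₁) (he₂ : w.IsUnit₁ 1 e₂) (hee : e₁ ≠ e₂)
    (hcong : ¬ w.IsUnit₁ (2 * (n : ℤ) + 1) (e₁ / e₂)) :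
    AddSubgroup.closure
        (({((0 : ZMod 2), (0 : ZMod 2)), (χ (e₁ * e₂), χ (-e₁)),
            (χ e₁, χ (e₁ * (e₁ - e₂))), (χ e₂, χ (e₂ - e₁))} : Set (ZMod 2 × ZMod 2)) ∪
          {p : ZMod 2 × ZMod 2 | ∃ x : K, x ≠ 0 ∧ x ≠ e₁ ∧ x ≠ e₂ ∧
            χ (x * (x - e₁) * (x - e₂)) = 0 ∧ p = (χ x, χ (x - e₁))}) =
      (⊤ : AddSubgroup (ZMod 2 × ZMod 2)) := by
  have := w.finite_residueField hext
  exact w.closure_descentImage_eq_top hχ hn hvan hnonvan he₁ he₂ hcong
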